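/- For a ternary cubic form f over ℂ, the following are equivalent: (1) the Hessian determinant det(∂ᵢ∂ⱼ f) is the zero polynomial and there exist y, z ∈ ℂ³ such that the restriction of f to the line through y and z has nonzero discriminant; (2) f = a₀·a³ + b₀·b³ for some nonzero a₀, b₀ ∈ ℂ and linearly independent linear forms a, b; (3) f = a·b·c for linear forms a, b, c that are linearly dependent but pairwise linearly independent. -/

import Mathlib

open MvPolynomial

/-- The Hessian determinant `det (∂ᵢ∂ⱼ f)` of a ternary form. -/
noncomputable def hessianDet (f : MvPolynomial (Fin 3) ℂ) : MvPolynomial (Fin 3) ℂ :=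
  Matrix.det (Matrix.of fun i j : Fin 3 => pderiv i (pderiv j f))

/-- The restriction of a ternary form `f` to the line through `y` and `z`:
the binary form `p(s,t) = f(s·y + t·z)` in the two variables `s = X 0`, `t = X 1`. -/
noncomputable def lineRestrict (f : MvPolynomial (Fin 3) ℂ) (y z : Fin 3 → ℂ) :
    MvPolynomial (Fin 2) ℂ :=
  aeval (fun i : Fin 3 => C (y i) * X 0 + C (z i) * X 1) f

/-- The discriminant `c₂²c₁² − 4c₃c₁³ − 4c₂³c₀ + 18c₃c₂c₁c₀ − 27c₃²c₀²` of a binary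
cubic `c₃s³ + c₂s²t + c₁st² + c₀t³`. -/
noncomputable def binCubicDisc (p : MvPolynomial (Fin 2) ℂ) : ℂ :=
  let c₃ := p.coeff (Finsupp.single 0 3)
  let c₂ := p.coeff (Finsupp.single 0 2 + Finsupp.single 1 1)
  let c₁ := p.coeff (Finsupp.single 0 1 + Finsupp.single 1 2)
  let c₀ := p.coeff (Finsupp.single 1 3)
  c₂ ^ 2 * c₁ ^ 2 - 4 * c₃ * c₁ ^ 3 - 4 * c₂ ^ 3 * c₀ + 18 * c₃ * c₂ * c₁ * c₀ -
    27 * c₃ ^ 2 * c₀ ^ 2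

/-- A linear form is a homogeneous polynomial of degree 1. -/
def IsLinearForm (a : MvPolynomial (Fin 3) ℂ) : Prop := a.IsHomogeneous 1


theorem exists_omega : ∃ w : ℂ, w ^ 2 + w + 1 = 0 ∧ w - w ^ 2 ≠ 0 := by
  obtain ⟨d, hd⟩ := IsAlgClosed.exists_pow_nat_eq (-3 : ℂ) (n := 2) (by norm_num)
  refine ⟨(d - 1) / 2, ?_, ?_⟩
  · linear_combination hd / 4
  · intro h
    have : d = 0 := by linear_combination h + hd / 4
    rw [this] at hd
    norm_num at hd

theorem linForm_comb {a b : MvPolynomial (Fin 3) ℂ} (ha : IsLinearForm a) (hb : IsLinearForm b)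
    (p q : ℂ) : IsLinearForm (C p * a + C q * b) := by
  have h1 := (isHomogeneous_C (Fin 3) p).mul ha
  have h2 := (isHomogeneous_C (Fin 3) q).mul hb
  rw [zero_add] at h1 h2
  exact h1.add h2

theorem pair_comb {a b : MvPolynomial (Fin 3) ℂ} (h : LinearIndependent ℂ ![a, b])
    (p q r s : ℂ) (hd : p * s - q * r ≠ 0) :
    LinearIndependent ℂ ![C p * a + C q * b, C r * a + C s * b] := by
  rw [LinearIndependent.pair_iff] at h ⊢
  intro u v huv
  obtain ⟨h1, h2⟩ := h (u * p + v * r) (u * q + v * s) (by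
    rw [← huv]; simp only [smul_eq_C_mul, map_add, map_mul]; ring)
  constructor
  · have : u * (p * s - q * r) = 0 := by linear_combination s * h1 - r * h2
    exact (mul_eq_zero.mp this).resolve_right hd
  · have : v * (p * s - q * r) = 0 := by linear_combination p * h2 - q * h1
    exact (mul_eq_zero.mp this).resolve_right hd

theorem two_to_three (f : MvPolynomial (Fin 3) ℂ)
    (h : ∃ a₀ b₀ : ℂ, ∃ a b : MvPolynomial (Fin 3) ℂ, a₀ ≠ 0 ∧ b₀ ≠ 0 ∧
       IsLinearForm a ∧ IsLinearForm b ∧ LinearIndependent ℂ ![a, b] ∧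
       f = C a₀ * a ^ 3 + C b₀ * b ^ 3) :
    ∃ a b c : MvPolynomial (Fin 3) ℂ, IsLinearForm a ∧ IsLinearForm b ∧ IsLinearForm c ∧
       ¬ LinearIndependent ℂ ![a, b, c] ∧
       LinearIndependent ℂ ![a, b] ∧ LinearIndependent ℂ ![a, c] ∧
       LinearIndependent ℂ ![b, c] ∧ f = a * b * c := by
  obtain ⟨a₀, b₀, a, b, ha0, hb0, ha, hb, hab, rfl⟩ := h
  obtain ⟨w, hw, hw'⟩ := exists_omega
  obtain ⟨p, rfl⟩ := IsAlgClosed.exists_pow_nat_eq a₀ (n := 3) (by norm_num)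
  obtain ⟨q, rfl⟩ := IsAlgClosed.exists_pow_nat_eq b₀ (n := 3) (by norm_num)
  have hp : p ≠ 0 := fun h => ha0 (by simp [h])
  have hq : q ≠ 0 := fun h => hb0 (by simp [h])
  have hpq := mul_ne_zero hp hq
  have hw1 : w - 1 ≠ 0 := fun h => hw' (by linear_combination (-w) * h)
  have hw2 : w ^ 2 - 1 ≠ 0 := fun h => hw' (by
    have : w = -2 := by linear_combination hw - h
    rw [this] at h; norm_num at h)
  have hC : (C w : MvPolynomial (Fin 3) ℂ) ^ 2 + C w + 1 = 0 := by
    rw [← C_pow, ← C_1, ← C_add, ← C_add, hw, C_0]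
  refine ⟨C p * a + C q * b, C p * a + C (w * q) * b, C p * a + C (w ^ 2 * q) * b,
    linForm_comb ha hb _ _, linForm_comb ha hb _ _, linForm_comb ha hb _ _, ?_,
    pair_comb hab _ _ _ _ ?_, pair_comb hab _ _ _ _ ?_, pair_comb hab _ _ _ _ ?_, ?_⟩
  · rw [Fintype.linearIndependent_iff]
    intro h
    have := h ![1, w, w ^ 2] (by
      simp [Fin.sum_univ_three, smul_eq_C_mul]
      linear_combination (C p * a + C q * b * (C w ^ 2 - C w + 1)) * hC) 0
    simp at this
  · intro h; exact mul_ne_zero hpq hw1 (by linear_combination h)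
  · intro h; exact mul_ne_zero hpq hw2 (by linear_combination h)
  · intro h; exact mul_ne_zero hpq hw' (by linear_combination -h)
  · simp only [map_mul, map_pow]
    have h3 : (C w : MvPolynomial (Fin 3) ℂ) ^ 3 = 1 := by linear_combination (C w - 1) * hC
    linear_combination (-(C p * a) ^ 2 * (C q * b) - (C p * a) * (C q * b) ^ 2 * C w) * hC - ((C q * b) ^ 3) * h3

theorem three_to_two (f : MvPolynomial (Fin 3) ℂ)
    (h : ∃ a b c : MvPolynomial (Fin 3) ℂ, IsLinearForm a ∧ IsLinearForm b ∧ IsLinearForm c ∧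
       ¬ LinearIndependent ℂ ![a, b, c] ∧
       LinearIndependent ℂ ![a, b] ∧ LinearIndependent ℂ ![a, c] ∧
       LinearIndependent ℂ ![b, c] ∧ f = a * b * c) :
    ∃ a₀ b₀ : ℂ, ∃ a b : MvPolynomial (Fin 3) ℂ, a₀ ≠ 0 ∧ b₀ ≠ 0 ∧
       IsLinearForm a ∧ IsLinearForm b ∧ LinearIndependent ℂ ![a, b] ∧
       f = C a₀ * a ^ 3 + C b₀ * b ^ 3 := by
  obtain ⟨a, b, c, ha, hb, hc, hdep, hab, hac, hbc, rfl⟩ := h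
  obtain ⟨w, hw, hw'⟩ := exists_omega
  rw [Fintype.not_linearIndependent_iff] at hdep
  obtain ⟨g, hg, hi⟩ := hdep
  simp only [Fin.sum_univ_three, Matrix.cons_val_zero, Matrix.cons_val_one, Matrix.cons_val] at hg
  have hne : g 0 ≠ 0 ∧ g 1 ≠ 0 ∧ g 2 ≠ 0 := by
    rw [LinearIndependent.pair_iff] at hab hac hbc
    refine ⟨fun h0 => ?_, fun h0 => ?_, fun h0 => ?_⟩
    · obtain ⟨h1, h2⟩ := hbc (g 1) (g 2) (by simpa [h0] using hg)
      obtain ⟨i, hi⟩ := hi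
      fin_cases i <;> first | exact hi h0 | exact hi h1 | exact hi h2
    · obtain ⟨h1, h2⟩ := hac (g 0) (g 2) (by simpa [h0] using hg)
      obtain ⟨i, hi⟩ := hi
      fin_cases i <;> first | exact hi h0 | exact hi h1 | exact hi h2
    · obtain ⟨h1, h2⟩ := hab (g 0) (g 1) (by simpa [h0] using hg)
      obtain ⟨i, hi⟩ := hi
      fin_cases i <;> first | exact hi h0 | exact hi h1 | exact hi h2
  obtain ⟨h0, h1, h2⟩ := hne
  have hk : 3 * (w - w ^ 2) * (g 0 * g 1 * g 2) ≠ 0 := by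
    simp [h0, h1, h2, hw']
  set k := (3 * (w - w ^ 2) * (g 0 * g 1 * g 2))⁻¹ with hkdef
  have hk0 : k ≠ 0 := inv_ne_zero hk
  have hkk : k * (3 * (w - w ^ 2) * (g 0 * g 1 * g 2)) = 1 := inv_mul_cancel₀ hk
  refine ⟨k, -k, C (g 0) * a + C (-w * g 1) * b, C (g 0) * a + C (-w ^ 2 * g 1) * b, hk0,
    neg_ne_zero.mpr hk0, linForm_comb ha hb _ _, linForm_comb ha hb _ _,
    pair_comb hab _ _ _ _ ?_, ?_⟩
  · intro h
    exact mul_ne_zero (mul_ne_zero h0 h1) hw' (by linear_combination h)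
  · have hC : (C w : MvPolynomial (Fin 3) ℂ) ^ 2 + C w + 1 = 0 := by
      rw [← C_pow, ← C_1, ← C_add, ← C_add, hw, C_0]
    have h3 : (C w : MvPolynomial (Fin 3) ℂ) ^ 3 = 1 := by linear_combination (C w - 1) * hC
    have hkC := congrArg (C : ℂ → MvPolynomial (Fin 3) ℂ) hkk
    simp only [smul_eq_C_mul] at hg
    simp only [map_mul, map_pow, map_sub, map_neg, map_one] at hkC ⊢
    rw [show (C (3:ℂ) : MvPolynomial (Fin 3) ℂ) = 3 from map_ofNat C 3] at hkC
    generalize (C w : MvPolynomial (Fin 3) ℂ) = W at *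
    generalize (C k : MvPolynomial (Fin 3) ℂ) = K at *
    generalize (C (g 0) : MvPolynomial (Fin 3) ℂ) = G0 at *
    generalize (C (g 1) : MvPolynomial (Fin 3) ℂ) = G1 at *
    generalize (C (g 2) : MvPolynomial (Fin 3) ℂ) = G2 at *
    linear_combination (-a*b*c) * hkC + K * 3 * (W - W^2) * G0 * G1 * a * b * hg +
      (K * (3 * G0 * a * G1 ^ 2 * b ^ 2 * W) + K * G1 ^ 3 * b ^ 3 * (-W ^ 3)) * h3

theorem pderiv_swap (f : MvPolynomial (Fin 3) ℂ) (i j : Fin 3) :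
    pderiv i (pderiv j f) = pderiv j (pderiv i f) := by
  by_cases hij : i = j
  · rw [hij]
  · ext m
    simp only [coeff_pderiv]
    have h1 : (m + Finsupp.single i 1 : Fin 3 →₀ ℕ) j = m j := by
      simp [Finsupp.single_apply, hij]
    have h2 : (m + Finsupp.single j 1 : Fin 3 →₀ ℕ) i = m i := by
      simp [Finsupp.single_apply, Ne.symm hij]
    rw [h1, h2, add_right_comm]
    ring

/-- the third derivatives of a cubic form -/
noncomputable def thirdD (f : MvPolynomial (Fin 3) ℂ) (i j k : Fin 3) : ℂ :=
  coeff 0 (pderiv i (pderiv j (pderiv k f)))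

/-- the polarization -/
noncomputable def polT (f : MvPolynomial (Fin 3) ℂ) (u v w : Fin 3 → ℂ) : ℂ :=
  ∑ i, ∑ j, ∑ k, thirdD f i j k * u i * v j * w k

theorem linForm_eq {a : MvPolynomial (Fin 3) ℂ} (ha : a.IsHomogeneous 1) :
    ∃ α : Fin 3 → ℂ, a = ∑ i, C (α i) * X i ∧ ∀ i, pderiv i a = C (α i) := by
  have h : ∀ i, pderiv i a = C (coeff 0 (pderiv i a)) := fun i =>
    totalDegree_eq_zero_iff_eq_C.mp (by
      have := (ha.pderiv (i := i)).totalDegree_le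
      omega)
  refine ⟨fun i => coeff 0 (pderiv i a), ?_, h⟩
  have := ha.sum_X_mul_pderiv
  rw [one_smul] at this
  rw [← this]
  refine Finset.sum_congr rfl fun i _ => ?_
  rw [this, h i, mul_comm]

theorem eval_linForm {a : MvPolynomial (Fin 3) ℂ} (ha : a.IsHomogeneous 1) (x : Fin 3 → ℂ) :
    eval x a = ∑ i, coeff 0 (pderiv i a) * x i := by
  obtain ⟨α, h1, h2⟩ := linForm_eq ha
  simp only [h2, coeff_zero_C]
  rw [h1]
  simp

theorem eval_hess_entry {f : MvPolynomial (Fin 3) ℂ} (hf : f.IsHomogeneous 3) (x : Fin 3 → ℂ)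
    (i j : Fin 3) : eval x (pderiv i (pderiv j f)) = ∑ k, thirdD f k i j * x k :=
  eval_linForm (hf.pderiv.pderiv) x

theorem eval_eq_polT {f : MvPolynomial (Fin 3) ℂ} (hf : f.IsHomogeneous 3) (x : Fin 3 → ℂ) :
    6 * eval x f = polT f x x x := by
  have h3 : ∀ x, ∑ i, x i * eval x (pderiv i f) = 3 * eval x f := by
    intro x
    have := congrArg (eval x) hf.sum_X_mul_pderiv
    simpa using this
  have h2 : ∀ j, ∑ i, x i * eval x (pderiv i (pderiv j f)) = 2 * eval x (pderiv j f) := by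
    intro j
    have := congrArg (eval x) (hf.pderiv (i := j)).sum_X_mul_pderiv
    simpa using this
  have : 6 * eval x f = ∑ j, x j * ∑ i, x i * eval x (pderiv i (pderiv j f)) := by
    simp only [h2]
    have := h3 x
    simp only [Fin.sum_univ_three] at this ⊢
    linear_combination (-2) * this
  rw [this]
  simp only [eval_hess_entry hf, polT, Fin.sum_univ_three]
  simp only [fun k i j => show thirdD f k i j = thirdD f k j i by
    unfold thirdD; rw [pderiv_swap f i j]] 
  ring

theorem core (T : (Fin 3 → ℂ) → (Fin 3 → ℂ) → (Fin 3 → ℂ) → ℂ)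
    (s1 : ∀ u v w, T u v w = T v u w) (s2 : ∀ u v w, T u v w = T u w v)
    (hadd : ∀ u u' v w, T (u + u') v w = T u v w + T u' v w)
    (hsmul : ∀ (c : ℂ) u v w, T (c • u) v w = c * T u v w)
    (hG : ∀ x u v w, Matrix.det !![T x u u, T x u v, T x u w; T x v u, T x v v, T x v w;
      T x w u, T x w v, T x w w] = 0)
    (y z : Fin 3 → ℂ)
    (hD : (T y y y * T z z z - T y y z * T y z z) ^ 2 -
      4 * (T y y y * T y z z - T y y z ^ 2) * (T y y z * T z z z - T y z z ^ 2) ≠ 0) :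
    ∃ u v, T u u u ≠ 0 ∧ T v v v ≠ 0 ∧ T u u v = 0 ∧ T v v u = 0 ∧
      ∀ w, T w w w = (T u u w) ^ 3 / (T u u u) ^ 2 + (T v v w) ^ 3 / (T v v v) ^ 2 := by
  have a2 : ∀ u v v' w, T u (v + v') w = T u v w + T u v' w := by
    intro u v v' w; rw [s1, hadd, s1, s1 v']
  have a3 : ∀ u v w w', T u v (w + w') = T u v w + T u v w' := by
    intro u v v' w; rw [s2, a2, s2, s2 u w]
  have m2 : ∀ (c : ℂ) u v w, T u (c • v) w = c * T u v w := by
    intro c u v w; rw [s1, hsmul, s1]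
  have m3 : ∀ (c : ℂ) u v w, T u v (c • w) = c * T u v w := by
    intro c u v w; rw [s2, m2, s2]
  have hroots : ∀ α β γ : ℂ, β ^ 2 - 4 * α * γ ≠ 0 → ∃ p q r s : ℂ, p * s - q * r ≠ 0 ∧
      α * p ^ 2 + β * p * q + γ * q ^ 2 = 0 ∧ α * r ^ 2 + β * r * s + γ * s ^ 2 = 0 := by
    intro α β γ h
    by_cases hα : α = 0
    · subst hα
      refine ⟨1, 0, -γ, β, ?_, by ring, by ring⟩
      intro h'
      apply h
      linear_combination β * h'
    · obtain ⟨d, hd⟩ := IsAlgClosed.exists_pow_nat_eq (β ^ 2 - 4 * α * γ) (n := 2) (by norm_num)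
      have hd0 : d ≠ 0 := by rintro rfl; apply h; rw [← hd]; ring
      refine ⟨-β + d, 2 * α, -β - d, 2 * α, ?_, ?_, ?_⟩
      · rw [show (-β + d) * (2 * α) - 2 * α * (-β - d) = 4 * (α * d) by ring]
        simp [hα, hd0]
      · linear_combination α * hd
      · linear_combination α * hd
  obtain ⟨p, q, r, s, hdet, hu, hv⟩ := hroots _ _ _ hD
  -- the two isotropic vectors
  obtain ⟨u, hu'⟩ : ∃ u, u = p • y + q • z := ⟨_, rfl⟩
  obtain ⟨v, hv'⟩ : ∃ v, v = r • y + s • z := ⟨_, rfl⟩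
  have e1 : T z y y = T y y z := by rw [s1, s2]
  have e2 : T y z y = T y y z := by rw [s2]
  have e3 : T z y z = T y z z := by rw [s1]
  have e4 : T z z y = T y z z := by rw [s2, s1]
  have hA : T u u u = p^3 * T y y y + 3*p^2*q * T y y z + 3 * p * q^2 * T y z z + q^3 * T z z z := by
    rw [hu']; simp only [hadd, a2, a3, hsmul, m2, m3, e1, e2, e3, e4]; ring
  have hDD : T v v v = r^3 * T y y y + 3*r^2*s * T y y z + 3 * r * s^2 * T y z z + s^3 * T z z z := by
    rw [hv']; simp only [hadd, a2, a3, hsmul, m2, m3, e1, e2, e3, e4]; ring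
  have hB : T u u v = p^2*r * T y y y + (p^2*s + 2*p*q*r) * T y y z + (2 * p * q * s + q^2*r) * T y z z
      + q^2*s * T z z z := by
    rw [hu', hv']; simp only [hadd, a2, a3, hsmul, m2, m3, e1, e2, e3, e4]; ring
  have hCC : T u v v = r^2*p * T y y y + (r^2*q + 2*r*s*p) * T y y z + (2 * r * s * q + s^2*p) * T y z z
      + s^2*q * T z z z := by
    rw [hu', hv']; simp only [hadd, a2, a3, hsmul, m2, m3, e1, e2, e3, e4]; ring
  have k1 : T u u u * T u v v - T u u v ^ 2 = 0 := by
    rw [hA, hB, hCC]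
    linear_combination (p * s - q * r) ^ 2 * hu
  have k2 : T u u v * T v v v - T u v v ^ 2 = 0 := by
    rw [hDD, hB, hCC]
    linear_combination (p * s - q * r) ^ 2 * hv
  have k3 : T u u u * T v v v - T u u v * T u v v ≠ 0 := by
    intro h
    have : (p * s - q * r) ^ 6 * ((T y y y * T z z z - T y y z * T y z z) ^ 2 -
      4 * (T y y y * T y z z - T y y z ^ 2) * (T y y z * T z z z - T y z z ^ 2)) = 0 := by
      have e : (T u u u * T v v v - T u u v * T u v v) ^ 2 -
        4 * (T u u u * T u v v - T u u v ^ 2) * (T u u v * T v v v - T u v v ^ 2) = 0 := by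
        rw [h, k1, k2]; ring
      rw [hA, hB, hCC, hDD] at e
      linear_combination e
    exact mul_ne_zero (pow_ne_zero 6 hdet) hD this
  clear hA hB hCC hDD
  have hB : T u u v = 0 := by
    have : T u u v * (T u u u * T v v v - T u u v * T u v v) = 0 := by
      linear_combination T u u u * k2 + T u v v * k1
    exact (mul_eq_zero.mp this).resolve_right k3
  have hC : T u v v = 0 := by
    have : T u v v * (T u u u * T v v v - T u u v * T u v v) = 0 := by
      linear_combination T v v v * k1 + T u u v * k2
    exact (mul_eq_zero.mp this).resolve_right k3
  rw [hB, zero_mul, sub_zero] at k3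
  have hA0 := left_ne_zero_of_mul k3
  have hD0 := right_ne_zero_of_mul k3
  have hC' : T v v u = 0 := by rw [s2, s1, hC]
  refine ⟨u, v, hA0, hD0, hB, hC', fun w => ?_⟩
  obtain ⟨w', hw'⟩ : ∃ w', w' = w + ((-(T u u w / T u u u)) • u + (-(T v v w / T v v v)) • v) :=
    ⟨_, rfl⟩
  have hw : w = w' + ((T u u w / T u u u) • u + (T v v w / T v v v) • v) := by
    rw [hw']; module
  have g1 : T u u w' = 0 := by
    rw [hw']; simp only [a3, m3, hB]; field_simp; ring
  have g2 : T v v w' = 0 := by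
    rw [hw']; simp only [a3, m3, hC']; field_simp; ring
  have f1 : T v u u = 0 := by rw [s1, s2, hB]
  have f2 : T u v u = 0 := by rw [s2, hB]
  have f3 : T v u v = 0 := by rw [s1, hC]
  have f5 : T w' u u = 0 := by rw [s1, s2, g1]
  have f6 : T u w' u = 0 := by rw [s2, g1]
  have f7 : T w' v v = 0 := by rw [s1, s2, g2]
  have f8 : T v w' v = 0 := by rw [s2, g2]
  have n1 : T u w' v = T u v w' := by rw [s2]
  have n2 : T v u w' = T u v w' := by rw [s1]
  have n3 : T v w' u = T u v w' := by rw [s2, s1]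
  have n4 : T w' u v = T u v w' := by rw [s1, s2]
  have n5 : T w' v u = T u v w' := by rw [s2, s1, s2]
  have n6 : T w' u w' = T u w' w' := by rw [s1]
  have n7 : T w' w' u = T u w' w' := by rw [s2, s1]
  have n8 : T w' v w' = T v w' w' := by rw [s1]
  have n9 : T w' w' v = T v w' w' := by rw [s2, s1]
  have key : ∀ α β γ : ℂ, T u u u * α * (T v v v * β) * (α * T u w' w' + β * T v w' w' + γ * T w' w' w')
      + 2 * (γ * T u v w') * (β * T u v w' + γ * T u w' w') * (α * T u v w' + γ * T v w' w')
      - T u u u * α * (α * T u v w' + γ * T v w' w') ^ 2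
      - T v v v * β * (β * T u v w' + γ * T u w' w') ^ 2
      - (γ * T u v w') ^ 2 * (α * T u w' w' + β * T v w' w' + γ * T w' w' w') = 0 := by
    intro α β γ
    have := hG (α • u + (β • v + γ • w')) u v w'
    simp only [hadd, hsmul, hB, hC, hC', g1, g2, f1, f2, f3, f5, f6, f7, f8, n1, n2, n3, n4, n5,
      n6, n7, n8, n9, Matrix.det_fin_three] at this
    simp at this
    linear_combination this
  have q0 : T u v w' = 0 := by
    have := key 1 0 0
    have : T u u u * T u v w' ^ 2 = 0 := by linear_combination -this
    simpa [hA0] using this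
  simp only [q0] at key
  have l0 : T u w' w' = 0 ∧ T v w' w' = 0 := by
    have h1 := key 1 1 0
    have h2 := key 1 (-1) 0
    constructor
    · have : (T u u u * T v v v) * T u w' w' = 0 := by linear_combination (h1 - h2) / 2
      exact (mul_eq_zero.mp this).resolve_left k3
    · have : (T u u u * T v v v) * T v w' w' = 0 := by linear_combination (h1 + h2) / 2
      exact (mul_eq_zero.mp this).resolve_left k3
  simp only [l0.1, l0.2] at key
  have c0 : T w' w' w' = 0 := by
    have h1 := key 1 1 1
    have : (T u u u * T v v v) * T w' w' w' = 0 := by linear_combination h1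
    exact (mul_eq_zero.mp this).resolve_left k3
  generalize T u u w = a at *
  generalize T v v w = b at *
  rw [hw]
  simp only [hadd, a2, a3, hsmul, m2, m3, hB, hC, hC', g1, g2, f1, f2, f3, f5, f6, f7, f8, n1, n2,
    n3, n4, n5, n6, n7, n8, n9, q0, l0.1, l0.2, c0]
  field_simp
  ring

theorem thirdD_s1 (f : MvPolynomial (Fin 3) ℂ) (i j k : Fin 3) :
    thirdD f i j k = thirdD f j i k := by
  unfold thirdD; rw [pderiv_swap _ i j]

theorem thirdD_s2 (f : MvPolynomial (Fin 3) ℂ) (i j k : Fin 3) :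
    thirdD f i j k = thirdD f i k j := by
  unfold thirdD; rw [pderiv_swap _ j k]

theorem polT_s1 (f : MvPolynomial (Fin 3) ℂ) (u v w : Fin 3 → ℂ) :
    polT f u v w = polT f v u w := by
  unfold polT
  rw [Finset.sum_comm]
  refine Finset.sum_congr rfl fun i _ => Finset.sum_congr rfl fun j _ =>
    Finset.sum_congr rfl fun k _ => ?_
  rw [thirdD_s1]; ring

theorem polT_s2 (f : MvPolynomial (Fin 3) ℂ) (u v w : Fin 3 → ℂ) :
    polT f u v w = polT f u w v := by
  unfold polT
  refine Finset.sum_congr rfl fun i _ => ?_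
  rw [Finset.sum_comm]
  refine Finset.sum_congr rfl fun j _ => Finset.sum_congr rfl fun k _ => ?_
  rw [thirdD_s2]; ring

theorem polT_add (f : MvPolynomial (Fin 3) ℂ) (u u' v w : Fin 3 → ℂ) :
    polT f (u + u') v w = polT f u v w + polT f u' v w := by
  simp only [polT, ← Finset.sum_add_distrib, Pi.add_apply]
  refine Finset.sum_congr rfl fun i _ => Finset.sum_congr rfl fun j _ =>
    Finset.sum_congr rfl fun k _ => ?_
  ring

theorem polT_smul (f : MvPolynomial (Fin 3) ℂ) (c : ℂ) (u v w : Fin 3 → ℂ) :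
    polT f (c • u) v w = c * polT f u v w := by
  simp only [polT, Finset.mul_sum, Pi.smul_apply, smul_eq_mul]
  refine Finset.sum_congr rfl fun i _ => Finset.sum_congr rfl fun j _ =>
    Finset.sum_congr rfl fun k _ => ?_
  ring

theorem polT_gram {f : MvPolynomial (Fin 3) ℂ} (hf : f.IsHomogeneous 3) (hH : hessianDet f = 0)
    (x u v w : Fin 3 → ℂ) :
    Matrix.det !![polT f x u u, polT f x u v, polT f x u w;
      polT f x v u, polT f x v v, polT f x v w;
      polT f x w u, polT f x w v, polT f x w w] = 0 := by
  have h0 : Matrix.det (Matrix.of fun i j : Fin 3 => ∑ k, thirdD f k i j * x k) = 0 := by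
    have h := congrArg (eval x) hH
    rw [hessianDet, RingHom.map_det, map_zero] at h
    rw [← h]
    congr 1
    ext i j
    simp [eval_hess_entry hf]
  set M := (Matrix.of fun i j : Fin 3 => ∑ k, thirdD f k i j * x k) with hM
  set P : Matrix (Fin 3) (Fin 3) ℂ := Matrix.of ![u, v, w] with hP
  have hent : ∀ i j, (P * M * P.transpose) i j = polT f x (P i) (P j) := by
    intro i j
    simp only [Matrix.mul_apply, Matrix.transpose_apply, hM, Matrix.of_apply, polT,
      Fin.sum_univ_three]
    ring
  have : !![polT f x u u, polT f x u v, polT f x u w;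
      polT f x v u, polT f x v v, polT f x v w;
      polT f x w u, polT f x w v, polT f x w w] = P * M * P.transpose := by
    ext i j
    rw [hent]
    fin_cases i <;> fin_cases j <;> rfl
  rw [this, Matrix.det_mul, Matrix.det_mul, h0]
  ring

theorem eval_lineRestrict (f : MvPolynomial (Fin 3) ℂ) (y z : Fin 3 → ℂ) (x : Fin 2 → ℂ) :
    eval x (lineRestrict f y z) = eval (x 0 • y + x 1 • z) f := by
  unfold lineRestrict
  induction f using MvPolynomial.induction_on with
  | C c => simp
  | add p q hp hq => simp only [map_add, hp, hq]
  | mul_X p i hp =>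
    simp only [map_mul, hp, aeval_X, eval_X, map_add, eval_C, Pi.add_apply, Pi.smul_apply,
      smul_eq_mul]
    ring

theorem disc_of_eval (p : MvPolynomial (Fin 2) ℂ) (c3 c2 c1 c0 : ℂ)
    (h : ∀ x : Fin 2 → ℂ, eval x p =
      c3 * x 0 ^ 3 + c2 * x 0 ^ 2 * x 1 + c1 * x 0 * x 1 ^ 2 + c0 * x 1 ^ 3) :
    binCubicDisc p = c2 ^ 2 * c1 ^ 2 - 4 * c3 * c1 ^ 3 - 4 * c2 ^ 3 * c0 + 18 * c3 * c2 * c1 * c0 -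
    27 * c3 ^ 2 * c0 ^ 2 := by
  have hp : p = monomial (Finsupp.single 0 3) c3
      + monomial (Finsupp.single 0 2 + Finsupp.single 1 1) c2
      + monomial (Finsupp.single 0 1 + Finsupp.single 1 2) c1
      + monomial (Finsupp.single 1 3) c0 := by
    apply MvPolynomial.funext
    intro x
    rw [h]
    simp [eval_monomial, Finsupp.prod_fintype, Fin.prod_univ_two]
    ring
  have key : ∀ m n : Fin 2 →₀ ℕ, m = n ↔ m 0 = n 0 ∧ m 1 = n 1 := by
    intro m n
    rw [Finsupp.ext_iff, Fin.forall_fin_two]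
  rw [hp]
  simp [binCubicDisc, coeff_monomial, key]

theorem one_to_two (f : MvPolynomial (Fin 3) ℂ) (hf : f.IsHomogeneous 3)
    (h : hessianDet f = 0 ∧ ∃ y z : Fin 3 → ℂ, binCubicDisc (lineRestrict f y z) ≠ 0) :
    ∃ a₀ b₀ : ℂ, ∃ a b : MvPolynomial (Fin 3) ℂ, a₀ ≠ 0 ∧ b₀ ≠ 0 ∧
       IsLinearForm a ∧ IsLinearForm b ∧ LinearIndependent ℂ ![a, b] ∧
       f = C a₀ * a ^ 3 + C b₀ * b ^ 3 := by
  obtain ⟨hH, y, z, hd⟩ := h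
  have a1 := polT_add f
  have m1 := polT_smul f
  have s1 := polT_s1 f
  have s2 := polT_s2 f
  have a2 : ∀ u v v' w, polT f u (v + v') w = polT f u v w + polT f u v' w := by
    intro u v v' w; rw [s1, a1, s1, s1 v']
  have a3 : ∀ u v w w', polT f u v (w + w') = polT f u v w + polT f u v w' := by
    intro u v v' w; rw [s2, a2, s2, s2 u w]
  have m2 : ∀ (c : ℂ) u v w, polT f u (c • v) w = c * polT f u v w := by
    intro c u v w; rw [s1, m1, s1]
  have m3 : ∀ (c : ℂ) u v w, polT f u v (c • w) = c * polT f u v w := by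
    intro c u v w; rw [s2, m2, s2]
  have e1 : polT f z y y = polT f y y z := by rw [s1, s2]
  have e2 : polT f y z y = polT f y y z := by rw [s2]
  have e3 : polT f z y z = polT f y z z := by rw [s1]
  have e4 : polT f z z y = polT f y z z := by rw [s2, s1]
  rw [disc_of_eval (lineRestrict f y z) (polT f y y y / 6) (polT f y y z / 2) (polT f y z z / 2)
    (polT f z z z / 6)] at hd
  swap
  · intro x
    have := eval_eq_polT hf (x 0 • y + x 1 • z)
    simp only [a1, a2, a3, m1, m2, m3, e1, e2, e3, e4] at this
    rw [eval_lineRestrict]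
    linear_combination this / 6
  obtain ⟨u, v, hA, hD, hB, hC, hw⟩ := core (polT f) s1 s2 a1 m1 (polT_gram hf hH) y z (by
    intro h
    apply hd
    linear_combination (-1 / 48) * h)
  have hlin : ∀ u : Fin 3 → ℂ, ∃ a : MvPolynomial (Fin 3) ℂ, IsLinearForm a ∧
      ∀ x, eval x a = polT f u u x := by
    intro u
    refine ⟨∑ k, C (∑ i, ∑ j, thirdD f i j k * u i * u j) * X k, ?_, ?_⟩
    · refine IsHomogeneous.sum _ _ _ fun i _ => ?_
      have := (isHomogeneous_C (Fin 3) (∑ i', ∑ j, thirdD f i' j i * u i' * u j)).mul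
        (isHomogeneous_X ℂ i)
      rwa [zero_add] at this
    · intro x
      simp only [map_sum, map_mul, eval_C, eval_X, polT, Fin.sum_univ_three, map_add]
      ring
  obtain ⟨a, ha, ha'⟩ := hlin u
  obtain ⟨b, hb, hb'⟩ := hlin v
  refine ⟨1 / (6 * polT f u u u ^ 2), 1 / (6 * polT f v v v ^ 2), a, b, by simp [hA], by simp [hD],
    ha, hb, ?_, ?_⟩
  · rw [LinearIndependent.pair_iff]
    intro s t hst
    have h1 := congrArg (eval u) hst
    have h2 := congrArg (eval v) hst
    simp [smul_eq_C_mul, ha', hb', hB, hC, hA, hD] at h1 h2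
    exact ⟨h1, h2⟩
  · apply MvPolynomial.funext
    intro x
    have h1 := eval_eq_polT hf x
    rw [hw x] at h1
    simp only [map_add, map_mul, map_pow, eval_C, ha', hb']
    field_simp at h1 ⊢
    linear_combination h1

theorem two_to_one (f : MvPolynomial (Fin 3) ℂ)
    (h : ∃ a₀ b₀ : ℂ, ∃ a b : MvPolynomial (Fin 3) ℂ, a₀ ≠ 0 ∧ b₀ ≠ 0 ∧
       IsLinearForm a ∧ IsLinearForm b ∧ LinearIndependent ℂ ![a, b] ∧
       f = C a₀ * a ^ 3 + C b₀ * b ^ 3) :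
    hessianDet f = 0 ∧ ∃ y z : Fin 3 → ℂ, binCubicDisc (lineRestrict f y z) ≠ 0 := by
  obtain ⟨a₀, b₀, a, b, ha0, hb0, ha, hb, hab, rfl⟩ := h
  obtain ⟨α, hα, hα'⟩ := linForm_eq ha
  obtain ⟨β, hβ, hβ'⟩ := linForm_eq hb
  constructor
  · have hd : ∀ i j, pderiv i (pderiv j (C a₀ * a ^ 3 + C b₀ * b ^ 3)) =
        6 * C a₀ * a * C (α i) * C (α j) + 6 * C b₀ * b * C (β i) * C (β j) := by
      intro i j
      simp only [map_add, pderiv_C_mul, pderiv_pow, hα', hβ', pderiv_mul, pderiv_C]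
      have h3 : pderiv i (3 : MvPolynomial (Fin 3) ℂ) = 0 := by
        rw [← map_ofNat C 3, pderiv_C]
      simp [h3]
      ring
    simp only [hessianDet, hd, Matrix.det_fin_three, Matrix.of_apply]
    ring
  · have : ∃ i j, α i * β j - α j * β i ≠ 0 := by
      by_contra! hcon
      rw [LinearIndependent.pair_iff] at hab
      have h1 : ∀ i, α i = 0 := by
        intro i
        have := (hab (β i) (-α i) (by
          rw [hα, hβ]
          simp only [smul_eq_C_mul, Finset.mul_sum, ← Finset.sum_add_distrib]
          refine Finset.sum_eq_zero fun j _ => ?_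
          rw [← mul_assoc, ← mul_assoc, ← add_mul, ← C_mul, ← C_mul, ← C_add,
            show β i * α j + -α i * β j = 0 by linear_combination -hcon i j]
          simp)).2
        simpa using this
      have := (hab 1 0 (by rw [hα]; simp [h1])).1
      simp at this
    obtain ⟨i, j, hij⟩ := this
    refine ⟨Pi.single i 1, Pi.single j 1, ?_⟩
    have ev : ∀ (γ : Fin 3 → ℂ) (x : Fin 2 → ℂ),
        eval (x 0 • Pi.single i 1 + x 1 • Pi.single j 1) (∑ k, C (γ k) * X k) =
        γ i * x 0 + γ j * x 1 := by
      intro γ x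
      simp [mul_add, Finset.sum_add_distrib, Pi.single_apply]
    rw [disc_of_eval _ (a₀ * α i ^ 3 + b₀ * β i ^ 3)
      (3 * (a₀ * α i ^ 2 * α j + b₀ * β i ^ 2 * β j))
      (3 * (a₀ * α i * α j ^ 2 + b₀ * β i * β j ^ 2)) (a₀ * α j ^ 3 + b₀ * β j ^ 3)]
    · intro h
      refine mul_ne_zero (mul_ne_zero (pow_ne_zero 2 ha0) (pow_ne_zero 2 hb0))
        (pow_ne_zero 6 hij) ?_
      linear_combination (-1 / 27) * h
    · intro x
      rw [eval_lineRestrict]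
      simp only [map_add, map_mul, map_pow, eval_C]
      rw [hα, hβ, ev, ev]
      ring

theorem stmt8 (f : MvPolynomial (Fin 3) ℂ) (hf : f.IsHomogeneous 3) :
    [hessianDet f = 0 ∧ ∃ y z : Fin 3 → ℂ, binCubicDisc (lineRestrict f y z) ≠ 0,
     ∃ a₀ b₀ : ℂ, ∃ a b : MvPolynomial (Fin 3) ℂ, a₀ ≠ 0 ∧ b₀ ≠ 0 ∧
       IsLinearForm a ∧ IsLinearForm b ∧ LinearIndependent ℂ ![a, b] ∧
       f = C a₀ * a ^ 3 + C b₀ * b ^ 3,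
     ∃ a b c : MvPolynomial (Fin 3) ℂ, IsLinearForm a ∧ IsLinearForm b ∧ IsLinearForm c ∧
       ¬ LinearIndependent ℂ ![a, b, c] ∧
       LinearIndependent ℂ ![a, b] ∧ LinearIndependent ℂ ![a, c] ∧
       LinearIndependent ℂ ![b, c] ∧ f = a * b * c].TFAE := by
  tfae_have 1 → 2 := one_to_two f hf
  tfae_have 2 → 1 := two_to_one f
  tfae_have 2 → 3 := two_to_three f
  tfae_have 3 → 2 := three_to_two f
  tfae_finish
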